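/- arXiv:2211.05460 — 2 statements merged into one kernel-verified Lean document; each statement's English description precedes it below -/
import Mathlib

section
/- For every integer k ≥ 2, the following identity of formal power series in x over ℤ holds: (1 − 2x + x^{k+1})² · Σ_{n≥1} ( Σ_{w ∈ F_{n,k}} edg(w) ) xⁿ = 11x − 5x² − (2 + 5k)·x^{k} − (9 − 5k)·x^{k+1} + 4x^{k+2} + 2x^{2k+1} − x^{2k+2}. In other words, the generating function for the total number of edges of all k-bonacci graphs on words of length n is E_k(x) = (11x − 5x² − (2+5k)x^k − (9−5k)x^{k+1} + 4x^{k+2} + 2x^{2k+1} − x^{2k+2})/(1 − 2x + x^{k+1})². -/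
open Finset

/-- Number of `1`s in a binary word. -/
def wOnes (w : List Bool) : ℕ := w.count true

/-- Number of maximal runs (blocks) of consecutive `1`s in a binary word. -/
def wRuns (w : List Bool) : ℕ := w.count true - (w.zip w.tail).count (true, true)

/-- The set `F_{n,k}` of binary words of length `n` avoiding `k` consecutive `1`s. -/
def kbonWords (n k : ℕ) : Finset (Fin n → Bool) :=
  Finset.univ.filter (fun w => ¬ (List.replicate k true <:+: List.ofFn w))

/-- Number of edges of the `k`-bonacci graph of a word `w` of length `n`:
`edg(w) = 3n + 1 + 2s(w) + b(w)`. -/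
def wEdg (n : ℕ) (w : List Bool) : ℕ := 3 * n + 1 + 2 * wOnes w + wRuns w

/-!
A word avoiding `1ᵏ` is either `1ʲ` or `1ʲ0w` with `j < k` and `w` again avoiding `1ᵏ`. With
`B = ∑_{j<k} xʲ` and `A` the generating function counting such words, this reads `A = B + xBA`,
that is, `(1 - xB)(1 + xA) = 1`. Since `edg(1ʲ0w) = edg(w) + edg(1ʲ) + 2`, the generating function
`E` of the edges, empty word included, satisfies `(1 - xB)E = D(1 + xA) + 2xBA` with
`D = ∑_{j<k} edg(1ʲ)xʲ`. Hence `(1 - xB)²E = D + 2xB²`, and multiplying by `(1 - x)²` clears the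
geometric sums.
-/

section Words

theorem count_zip_tail_le_count_tail {α : Type*} [DecidableEq α] (w : List α) (a b : α) :
    (w.zip w.tail).count (a, b) ≤ w.tail.count b := by
  have count_le_map : (w.zip w.tail).count (a, b) ≤ ((w.zip w.tail).map Prod.snd).count b :=
    List.count_le_count_map (f := Prod.snd) (x := (a, b))
  rwa [List.map_snd_zip (by simp)] at count_le_map

theorem wRuns_cons_false (w : List Bool) : wRuns (false :: w) = wRuns w := by
  cases w <;> simp [wRuns, List.count_cons]

theorem wRuns_true_cons_true (w : List Bool) : wRuns (true :: true :: w) = wRuns (true :: w) := by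
  simp [wRuns]

theorem wRuns_true_cons_false (w : List Bool) : wRuns (true :: false :: w) = wRuns w + 1 := by
  have pairs_le : ((false :: w).zip w).count (true, true) ≤ w.count true :=
    count_zip_tail_le_count_tail (false :: w) true true
  rw [← wRuns_cons_false w]
  simp only [wRuns, List.tail_cons, List.zip_cons_cons, List.count_cons_self,
    List.count_cons_of_ne, ne_eq, Prod.mk.injEq, Bool.false_eq_true, and_false,
    not_false_eq_true]
  exact Nat.sub_add_comm pairs_le

theorem wRuns_replicate_succ_append (j : ℕ) (w : List Bool) :
    wRuns (List.replicate (j + 1) true ++ w) = wRuns (true :: w) := by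
  induction j with
  | zero => rfl
  | succ j ih => rw [← ih]; exact wRuns_true_cons_true _

theorem wRuns_replicate_succ (j : ℕ) : wRuns (List.replicate (j + 1) true) = 1 := by
  rw [← List.append_nil (List.replicate _ _), wRuns_replicate_succ_append]
  rfl

theorem wRuns_replicate_append_false (j : ℕ) (w : List Bool) :
    wRuns (List.replicate j true ++ false :: w) = wRuns w + wRuns (List.replicate j true) := by
  cases j with
  | zero => exact wRuns_cons_false w
  | succ j => rw [wRuns_replicate_succ_append, wRuns_true_cons_false, wRuns_replicate_succ]

theorem wEdg_replicate_append_false (j : ℕ) (w : List Bool) :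
    wEdg (List.replicate j true ++ false :: w).length (List.replicate j true ++ false :: w) =
      wEdg w.length w + wEdg j (List.replicate j true) + 2 := by
  simp only [wEdg, wOnes, wRuns_replicate_append_false, List.count_append, List.length_append,
    List.length_replicate, List.length_cons, List.count_cons_of_ne Bool.false_ne_true]
  ring

theorem wEdg_replicate_succ (j : ℕ) :
    wEdg (j + 1) (List.replicate (j + 1) true) = 5 * j + 7 := by
  rw [wEdg, wOnes, List.count_replicate_self, wRuns_replicate_succ]
  ring

theorem replicate_infix_replicate_append_false {k j : ℕ} (hj : j < k) (w : List Bool) :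
    List.replicate k true <:+: List.replicate j true ++ false :: w ↔
      List.replicate k true <:+: w := by
  have not_prefix (i : ℕ) (hi : i < k) :
      ¬ List.replicate k true <+: List.replicate i true ++ false :: w := fun h ↦ by
    have letters_eq := h.getElem (i := i) (by simpa using hi)
    simp at letters_eq
  induction j with
  | zero => exact List.infix_cons_iff.trans (or_iff_right (not_prefix 0 hj))
  | succ j ih =>
    exact (List.infix_cons_iff.trans (or_iff_right (not_prefix (j + 1) hj))).trans
      (ih (j.lt_succ_self.trans hj))

end Words

section GeneratingFunctions

open PowerSeries

variable {R : Type*}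

/-- The generating function `∑_w g(w) x^|w|` of a weight `g`, over all binary words `w`. -/
def wordGF [Semiring R] (g : List Bool → R) : R⟦X⟧ :=
  .mk fun n ↦ ∑ w : Fin n → Bool, g (List.ofFn w)

/-- The generating function `∑_w g(w) x^|w|` of a weight `g`, over the `k`-bonacci words `w`,
the empty word included. -/
def kbonGF [Semiring R] (k : ℕ) (g : List Bool → R) : R⟦X⟧ :=
  .mk fun n ↦ ∑ w ∈ kbonWords n k, g (List.ofFn w)

theorem sum_comp_ofFn_succ [AddCommMonoid R] (n : ℕ) (g : List Bool → R) :
    ∑ w : Fin (n + 1) → Bool, g (List.ofFn w) =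
      ∑ w : Fin n → Bool, g (false :: List.ofFn w) +
        ∑ w : Fin n → Bool, g (true :: List.ofFn w) := by
  rw [← (Fin.consEquiv fun _ : Fin (n + 1) ↦ Bool).sum_comp, Fintype.sum_prod_type]
  simp [Fin.consEquiv, List.ofFn_succ, add_comm]

theorem wordGF_eq_C_add [Semiring R] (g : List Bool → R) :
    wordGF g = C (g []) +
      X * (wordGF (fun w ↦ g (false :: w)) + wordGF (fun w ↦ g (true :: w))) := by
  ext n
  cases n with
  | zero => simp [wordGF]
  | succ n =>
    simp only [wordGF, coeff_mk, map_add, coeff_succ_X_mul, coeff_C, sum_comp_ofFn_succ,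
      n.succ_ne_zero, if_false, zero_add]

theorem wordGF_eq_sum_range_add [CommSemiring R] (g : List Bool → R) (m : ℕ) :
    wordGF g =
      ∑ j ∈ range m, X ^ j * (C (g (List.replicate j true)) +
        X * wordGF (fun w ↦ g (List.replicate j true ++ false :: w))) +
      X ^ m * wordGF (fun w ↦ g (List.replicate m true ++ w)) := by
  induction m with
  | zero => simp
  | succ m ih =>
    rw [sum_range_succ, ih, wordGF_eq_C_add fun w ↦ g (List.replicate m true ++ w)]
    simp only [List.append_nil, List.replicate_succ', List.append_assoc, List.singleton_append]
    ring

theorem kbonGF_eq_wordGF [Semiring R] (k : ℕ) (g : List Bool → R) :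
    kbonGF k g = wordGF fun w ↦ if List.replicate k true <:+: w then 0 else g w := by
  ext n
  simp [kbonGF, wordGF, kbonWords, sum_filter, ite_not]

theorem kbonGF_eq_sum_range [CommSemiring R] (k : ℕ) (g : List Bool → R) :
    kbonGF k g = ∑ j ∈ range k, X ^ j * (C (g (List.replicate j true)) +
      X * kbonGF k fun w ↦ g (List.replicate j true ++ false :: w)) := by
  have full_block (w : List Bool) : List.replicate k true <:+: List.replicate k true ++ w :=
    (List.prefix_append _ _).isInfix
  have wordGF_zero : wordGF (fun _ ↦ (0 : R)) = 0 := by ext; simp [wordGF]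
  rw [kbonGF_eq_wordGF, wordGF_eq_sum_range_add _ k]
  simp only [full_block, if_true, wordGF_zero, mul_zero, add_zero]
  refine sum_congr rfl fun j hj ↦ ?_
  have short_block : ¬ List.replicate k true <:+: List.replicate j true := fun h ↦
    (mem_range.1 hj).not_ge (by simpa using h.length_le)
  simp only [replicate_infix_replicate_append_false (mem_range.1 hj), short_block, if_false,
    kbonGF_eq_wordGF]

theorem kbonGF_add_const [CommSemiring R] (k : ℕ) (g : List Bool → R) (c : R) :
    kbonGF k (fun w ↦ g w + c) = kbonGF k g + C c * kbonGF k 1 := by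
  ext n
  simp [kbonGF, sum_add_distrib, mul_comm]

theorem kbonGF_one_eq_geom_sum_mul [CommSemiring R] (k : ℕ) :
    kbonGF k (1 : List Bool → R) =
      (∑ j ∈ range k, X ^ j) * (1 + X * kbonGF k (1 : List Bool → R)) := by
  conv_lhs => rw [kbonGF_eq_sum_range]
  simp only [Pi.one_apply, map_one, sum_mul]
  rfl

theorem sq_mul_kbonGF_of_additive [CommRing R] {k : ℕ} {g : List Bool → R} {d : R}
    (hg : ∀ j w, g (List.replicate j true ++ false :: w) = g w + (g (List.replicate j true) + d)) :
    (1 - X * ∑ j ∈ range k, X ^ j) ^ 2 * kbonGF k g =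
      ∑ j ∈ range k, C (g (List.replicate j true)) * X ^ j +
        C d * X * (∑ j ∈ range k, X ^ j) ^ 2 := by
  set B : R⟦X⟧ := ∑ j ∈ range k, X ^ j with hB
  set D : R⟦X⟧ := ∑ j ∈ range k, C (g (List.replicate j true)) * X ^ j with hD
  set A : R⟦X⟧ := kbonGF k 1
  have count_eq : A = B * (1 + X * A) := kbonGF_one_eq_geom_sum_mul k
  have weight_eq : kbonGF k g = D + X * B * kbonGF k g + X * (D + C d * B) * A := by
    conv_lhs => rw [kbonGF_eq_sum_range]
    simp only [hg, kbonGF_add_const, hB, hD, mul_sum, sum_mul, ← sum_add_distrib, map_add]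
    exact sum_congr rfl fun j _ ↦ by ring
  have inverse : (1 - X * B) * (1 + X * A) = 1 := by linear_combination X * count_eq
  linear_combination (1 - X * B) * weight_eq + D * inverse + C d * X * B * count_eq

theorem sq_mul_kbonGF_wEdg (k : ℕ) :
    (1 - X * ∑ j ∈ range k, X ^ j) ^ 2 * kbonGF k (fun w ↦ (wEdg w.length w : ℤ)) =
      ∑ j ∈ range k, C (wEdg j (List.replicate j true) : ℤ) * X ^ j +
        2 * X * (∑ j ∈ range k, X ^ j) ^ 2 := by
  have additive (j : ℕ) (w : List Bool) :
      (wEdg (List.replicate j true ++ false :: w).length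
        (List.replicate j true ++ false :: w) : ℤ) =
      wEdg w.length w + (wEdg (List.replicate j true).length (List.replicate j true) + 2) := by
    rw [wEdg_replicate_append_false, List.length_replicate]
    push_cast
    ring
  simpa using sq_mul_kbonGF_of_additive (k := k) (g := fun w ↦ (wEdg w.length w : ℤ)) additive

theorem sq_mul_sum_wEdg_replicate {k : ℕ} (hk : 1 ≤ k) :
    (1 - X : ℤ⟦X⟧) ^ 2 * ∑ j ∈ range k, C (wEdg j (List.replicate j true) : ℤ) * X ^ j =
      1 + 5 * X - X ^ 2 - (2 + 5 * (k : ℤ⟦X⟧)) * X ^ k - (3 - 5 * (k : ℤ⟦X⟧)) * X ^ (k + 1) := by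
  induction k, hk using Nat.le_induction with
  | base =>
    have edges_nil : wEdg 0 (List.replicate 0 true) = 1 := rfl
    rw [sum_range_one, edges_nil, Nat.cast_one, Nat.cast_one, map_one]
    ring
  | succ k hk ih =>
    obtain ⟨j, rfl⟩ := Nat.exists_eq_add_of_le' hk
    rw [sum_range_succ, mul_add, ih, wEdg_replicate_succ]
    push_cast
    simp only [map_add, map_mul, map_ofNat, map_natCast]
    ring

theorem mk_sum_wEdg_eq_kbonGF_sub_one {k : ℕ} (hk : 1 ≤ k) :
    (PowerSeries.mk fun n ↦
      if n = 0 then 0 else ∑ w ∈ kbonWords n k, (wEdg n (List.ofFn w) : ℤ)) =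
      kbonGF k (fun w ↦ (wEdg w.length w : ℤ)) - 1 := by
  ext n
  cases n with
  | zero => simp [kbonGF, kbonWords, wEdg, wOnes, wRuns, Nat.ne_of_gt hk]
  | succ n => simp [kbonGF, coeff_one]

end GeneratingFunctions

theorem total_edges_gf (k : ℕ) (hk : 2 ≤ k) :
    (1 - 2 * PowerSeries.X + PowerSeries.X ^ (k + 1)) ^ 2
      * PowerSeries.mk (fun n =>
          if n = 0 then 0 else ∑ w ∈ kbonWords n k, (wEdg n (List.ofFn w) : ℤ))
    = PowerSeries.C (R := ℤ) 11 * PowerSeries.X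
        - PowerSeries.C (R := ℤ) 5 * PowerSeries.X ^ 2
        - PowerSeries.C (R := ℤ) (2 + 5 * (k : ℤ)) * PowerSeries.X ^ k
        - PowerSeries.C (R := ℤ) (9 - 5 * (k : ℤ)) * PowerSeries.X ^ (k + 1)
        + PowerSeries.C (R := ℤ) 4 * PowerSeries.X ^ (k + 2)
        + PowerSeries.C (R := ℤ) 2 * PowerSeries.X ^ (2 * k + 1)
        - PowerSeries.X ^ (2 * k + 2) := by
  set B : PowerSeries ℤ := ∑ j ∈ range k, PowerSeries.X ^ j
  have geom : (1 - PowerSeries.X) * B = 1 - PowerSeries.X ^ k := mul_neg_geom_sum _ k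
  have edges := sq_mul_kbonGF_wEdg k
  have one_le_k : 1 ≤ k := one_le_two.trans hk
  have blocks := sq_mul_sum_wEdg_replicate one_le_k
  rw [mk_sum_wEdg_eq_kbonGF_sub_one one_le_k]
  simp only [map_add, map_sub, map_mul, map_ofNat, map_natCast]
  have denominator : 1 - 2 * PowerSeries.X + PowerSeries.X ^ (k + 1) =
      (1 - PowerSeries.X) * (1 - PowerSeries.X * B) := by
    linear_combination PowerSeries.X * geom
  rw [mul_sub, mul_one]
  nth_rw 1 [denominator]
  linear_combination (1 - PowerSeries.X) ^ 2 * edges + blocks +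
    2 * PowerSeries.X * ((1 - PowerSeries.X) * B + (1 - PowerSeries.X ^ k)) * geom
end

section
/- Let v_n(p,q) = Σ_{w ∈ F_{n,2}} p^{edg(w)} q^{ver(w)} ∈ ℤ[p,q]. Then for all n ≥ 3, v_n(p,q) = p³q²·v_{n−1}(p,q) + p⁹q⁶·v_{n−2}(p,q), with initial values v_1(p,q) = p⁴q⁴ + p⁷q⁶ and v_2(p,q) = p⁷q⁶ + 2p^{10}q⁸; moreover, for all n ≥ 1, v_n(p,q) = Σ_{i=0}^{⌊(n+1)/2⌋} C(n+1−i, i) · p^{3n+1+3i} q^{2n+2+2i}. -/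
open Finset

/-- The polynomial ring `ℤ[p,q]`. -/
abbrev Rpq : Type := MvPolynomial (Fin 2) ℤ

noncomputable def pvar : Rpq := MvPolynomial.X 0
noncomputable def qvar : Rpq := MvPolynomial.X 1

/-- `v_n(p,q) = Σ_{w ∈ F_{n,2}} p^{edg(w)} q^{ver(w)}`, where for a Fibonacci word the graph
has `ver(w) = 2n + 2 + 2s(w)` vertices and `edg(w) = 3n + 1 + 3s(w)` edges. -/
noncomputable def vpoly (n : ℕ) : Rpq :=
  ∑ w ∈ kbonWords n 2,
    pvar ^ (3 * n + 1 + 3 * wOnes (List.ofFn w)) * qvar ^ (2 * n + 2 + 2 * wOnes (List.ofFn w))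

/-!
A Fibonacci word of length `n + 2` is either `0u` or `10u` with `u` a Fibonacci word. Weighting
each `1` by `x`, the generating sums `E n` satisfy `E (n + 2) = E (n + 1) + x * E n`, and Pascal's
rule gives the same recurrence for the weighted sums along the shallow diagonals of Pascal's
triangle. Finally `v_n` is `p ^ (3 * n + 1) * q ^ (2 * n + 2)` times `E n` at `x = p ^ 3 * q ^ 2`.
-/

section Words

theorem sum_ofFn_succ {α M : Type*} [Fintype α] [AddCommMonoid M] (n : ℕ) (f : List α → M) :
    ∑ w : Fin (n + 1) → α, f (List.ofFn w) = ∑ a, ∑ w : Fin n → α, f (a :: List.ofFn w) := by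
  rw [← (Fin.consEquiv fun _ : Fin (n + 1) => α).sum_comp, Fintype.sum_prod_type]
  simp [Fin.consEquiv, List.ofFn_succ]

theorem replicate_two_true_infix_false_cons (l : List Bool) :
    List.replicate 2 true <:+: false :: l ↔ List.replicate 2 true <:+: l := by
  simp [List.infix_cons_iff, List.replicate_succ]

theorem replicate_two_true_infix_true_true_cons (l : List Bool) :
    List.replicate 2 true <:+: true :: true :: l :=
  (List.prefix_append _ l).isInfix

theorem replicate_two_true_infix_true_false_cons (l : List Bool) :
    List.replicate 2 true <:+: true :: false :: l ↔ List.replicate 2 true <:+: l := by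
  simp [List.infix_cons_iff, List.replicate_succ]

theorem sum_kbonWords_two_add_two {M : Type*} [AddCommMonoid M] (n : ℕ) (f : List Bool → M) :
    ∑ w ∈ kbonWords (n + 2) 2, f (List.ofFn w) =
      ∑ w ∈ kbonWords (n + 1) 2, f (false :: List.ofFn w) +
        ∑ w ∈ kbonWords n 2, f (true :: false :: List.ofFn w) := by
  simp only [kbonWords, sum_filter]
  rw [sum_ofFn_succ (n + 1) fun l => if ¬ List.replicate 2 true <:+: l then f l else 0,
    Fintype.sum_bool, add_comm,
    sum_ofFn_succ n fun l => if ¬ List.replicate 2 true <:+: true :: l then f (true :: l) else 0,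
    Fintype.sum_bool]
  simp only [replicate_two_true_infix_false_cons, replicate_two_true_infix_true_true_cons,
    replicate_two_true_infix_true_false_cons, not_true_eq_false, if_false, sum_const_zero,
    zero_add]

end Words

section Enumerators

variable {R : Type*} [CommSemiring R] (x : R)

/-- The generating polynomial of Fibonacci words of length `n` by number of `1`s, given by its
value at an element `x` of a semiring so that it can be used at `x = p ^ 3 * q ^ 2`. -/
def fibonacciWordSum (n : ℕ) : R :=
  ∑ w ∈ kbonWords n 2, x ^ wOnes (List.ofFn w)

theorem fibonacciWordSum_zero : fibonacciWordSum x 0 = 1 := by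
  simp [fibonacciWordSum, kbonWords, wOnes]

theorem fibonacciWordSum_one : fibonacciWordSum x 1 = 1 + x := by
  have kbonWords_one : kbonWords 1 2 = univ := by decide
  rw [fibonacciWordSum, kbonWords_one, sum_ofFn_succ 0 fun l => x ^ wOnes l]
  simp [wOnes, add_comm]

theorem fibonacciWordSum_add_two (n : ℕ) :
    fibonacciWordSum x (n + 2) = fibonacciWordSum x (n + 1) + x * fibonacciWordSum x n := by
  rw [fibonacciWordSum, sum_kbonWords_two_add_two n fun l => x ^ wOnes l]
  simp [fibonacciWordSum, wOnes, pow_succ', mul_sum]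

/-- The sum of the binomial coefficients `C(i, j)` along the shallow diagonal `i + j = m` of
Pascal's triangle, weighted by `x ^ j`; at `x = 1` it is the Fibonacci number `F_{m+1}`. -/
def shallowDiagonalSum (m : ℕ) : R :=
  ∑ ij ∈ antidiagonal m, (ij.1.choose ij.2 : R) * x ^ ij.2

theorem shallowDiagonalSum_add_two (m : ℕ) :
    shallowDiagonalSum x (m + 2) = shallowDiagonalSum x (m + 1) + x * shallowDiagonalSum x m := by
  have pascal (i j : ℕ) : ((i + 1).choose (j + 1) : R) * x ^ (j + 1) =
      x * ((i.choose j : R) * x ^ j) + (i.choose (j + 1) : R) * x ^ (j + 1) := by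
    rw [Nat.choose_succ_succ]
    push_cast
    ring
  simp only [shallowDiagonalSum]
  rw [Finset.Nat.antidiagonal_succ_succ', Finset.Nat.antidiagonal_succ']
  simp [pascal, sum_add_distrib, mul_sum, add_comm, add_left_comm]

theorem shallowDiagonalSum_eq_sum_range (m : ℕ) :
    shallowDiagonalSum x m = ∑ j ∈ range (m / 2 + 1), ((m - j).choose j : R) * x ^ j := by
  rw [shallowDiagonalSum, ← Finset.Nat.sum_antidiagonal_swap,
    Finset.Nat.sum_antidiagonal_eq_sum_range_succ_mk]
  refine (sum_subset (range_mono (by lia)) fun j _ hj => ?_).symm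
  have hlt : m - j < j := by
    rw [mem_range] at hj
    lia
  simp [Nat.choose_eq_zero_of_lt hlt]

theorem fibonacciWordSum_eq_shallowDiagonalSum (n : ℕ) :
    fibonacciWordSum x n = shallowDiagonalSum x (n + 1) := by
  induction n using Nat.twoStepInduction with
  | zero => simp [fibonacciWordSum_zero, shallowDiagonalSum, Finset.Nat.antidiagonal_succ]
  | one => simp [fibonacciWordSum_one, shallowDiagonalSum, Finset.Nat.antidiagonal_succ, add_comm]
  | more n ih ih' => rw [fibonacciWordSum_add_two, shallowDiagonalSum_add_two, ih, ih']

theorem fibonacciWordSum_eq_sum_choose (n : ℕ) :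
    fibonacciWordSum x n =
      ∑ i ∈ range ((n + 1) / 2 + 1), ((n + 1 - i).choose i : R) * x ^ i := by
  rw [fibonacciWordSum_eq_shallowDiagonalSum, shallowDiagonalSum_eq_sum_range]

end Enumerators

theorem vpoly_eq_mul_fibonacciWordSum (n : ℕ) :
    vpoly n =
      pvar ^ (3 * n + 1) * qvar ^ (2 * n + 2) * fibonacciWordSum (pvar ^ 3 * qvar ^ 2) n := by
  rw [vpoly, fibonacciWordSum, mul_sum]
  exact sum_congr rfl fun w _ => by ring

theorem vpoly_add_two (n : ℕ) :
    vpoly (n + 2) = pvar ^ 3 * qvar ^ 2 * vpoly (n + 1) + pvar ^ 9 * qvar ^ 6 * vpoly n := by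
  simp only [vpoly_eq_mul_fibonacciWordSum, fibonacciWordSum_add_two]
  ring

theorem vpoly_one : vpoly 1 = pvar ^ 4 * qvar ^ 4 + pvar ^ 7 * qvar ^ 6 := by
  rw [vpoly_eq_mul_fibonacciWordSum, fibonacciWordSum_one]
  ring

theorem vpoly_two : vpoly 2 = pvar ^ 7 * qvar ^ 6 + 2 * pvar ^ 10 * qvar ^ 8 := by
  rw [vpoly_eq_mul_fibonacciWordSum, fibonacciWordSum_add_two, fibonacciWordSum_one,
    fibonacciWordSum_zero]
  ring

theorem vpoly_eq_sum_choose (n : ℕ) :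
    vpoly n = ∑ i ∈ range ((n + 1) / 2 + 1),
      ((n + 1 - i).choose i : Rpq) * pvar ^ (3 * n + 1 + 3 * i) * qvar ^ (2 * n + 2 + 2 * i) := by
  rw [vpoly_eq_mul_fibonacciWordSum, fibonacciWordSum_eq_sum_choose, mul_sum]
  exact sum_congr rfl fun i _ => by ring

theorem fibonacci_graph_recurrence_and_closed_form :
    (∀ n : ℕ, 3 ≤ n →
      vpoly n = pvar ^ 3 * qvar ^ 2 * vpoly (n - 1) + pvar ^ 9 * qvar ^ 6 * vpoly (n - 2))
    ∧ vpoly 1 = pvar ^ 4 * qvar ^ 4 + pvar ^ 7 * qvar ^ 6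
    ∧ vpoly 2 = pvar ^ 7 * qvar ^ 6 + 2 * pvar ^ 10 * qvar ^ 8
    ∧ ∀ n : ℕ, 1 ≤ n →
        vpoly n = ∑ i ∈ Finset.range ((n + 1) / 2 + 1),
          (Nat.choose (n + 1 - i) i : Rpq)
            * pvar ^ (3 * n + 1 + 3 * i) * qvar ^ (2 * n + 2 + 2 * i) := by
  refine ⟨fun n hn => ?_, vpoly_one, vpoly_two, fun n _ => vpoly_eq_sum_choose n⟩
  obtain ⟨m, rfl⟩ := Nat.exists_eq_add_of_le' (show 2 ≤ n by lia)
  exact vpoly_add_two m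
end
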